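/- arXiv:2404.04847 — 2 statements merged into one kernel-verified Lean document; each statement's English description precedes it below -/
import Mathlib

section
/- Let (F,W,A,r) be a capacity-balanced many-to-one assignment market with a dominant diagonal optimal matching μ. Then the τ-value of the associated game v_γ is a core allocation and equals the average of the firm-optimal and worker-optimal core allocations: τ(v_γ) = (x^f/2 ; y^w/2), where x^f_i=Σ_{j∈μ(i)} a_{ij} for i∈F and y^w_j=a_{j^μ j} for j∈W. -/
/-!
A dominant diagonal means that no matching yields a firm `i` more than `x^f_i`, and none yields a
pair containing a worker `j` more than `y^w_j`. So a coalition is worth at most the sum of `x^f`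
over its firms, and also at most the sum of `y^w` over its workers; the diagonal attains the first
bound when all workers are present and the second when all firms are. Hence the utopia vector is
`(x^f ; y^w)`. A coalition containing `k` cannot be worth more than the utopia payoffs of the side
opposite to `k`, so all minimal rights vanish and the τ-value is the efficient multiple of the
utopia vector. Each side of that vector sums to `v(N)`, which gives the factor `1/2`; averaging the
two bounds on a coalition puts the result in the core.
-/

open Finset
open scoped Classical

noncomputable section

variable {F W : Type*} [Fintype F] [Fintype W]

/-- `μ` is a matching between the firm coalition `S` and the worker coalition `T`:
each firm `i ∈ S` appears in at most `r i` pairs and each worker in `T` in at most one pair. -/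
def IsMatching (r : F → ℕ) (S : Finset F) (T : Finset W) (μ : Finset (F × W)) : Prop :=
  (∀ p ∈ μ, p.1 ∈ S ∧ p.2 ∈ T) ∧
  (∀ i : F, (μ.filter fun p => p.1 = i).card ≤ r i) ∧
  (∀ j : W, (μ.filter fun p => p.2 = j).card ≤ 1)

/-- total value of a matching -/
def matchValue (A : F → W → ℝ) (μ : Finset (F × W)) : ℝ := ∑ p ∈ μ, A p.1 p.2

lemma empty_isMatching (r : F → ℕ) (S : Finset F) (T : Finset W) :
    IsMatching r S T (∅ : Finset (F × W)) := by
  refine ⟨by simp, ?_, ?_⟩ <;> intro _ <;> simp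

/-- worth of the coalition formed by firms `S` and workers `T`. -/
def vGamma (A : F → W → ℝ) (r : F → ℕ) (S : Finset F) (T : Finset W) : ℝ :=
  ((S ×ˢ T).powerset.filter fun μ => IsMatching r S T μ).sup'
    ⟨∅, Finset.mem_filter.mpr ⟨Finset.mem_powerset.mpr (Finset.empty_subset _),
        empty_isMatching r S T⟩⟩ (matchValue A)

/-- firms belonging to a coalition of `F ⊕ W` -/
def firmPart (C : Finset (F ⊕ W)) : Finset F := univ.filter (fun i => Sum.inl i ∈ C)

/-- workers belonging to a coalition of `F ⊕ W` -/
def workerPart (C : Finset (F ⊕ W)) : Finset W := univ.filter (fun j => Sum.inr j ∈ C)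

/-- the coalitional function of the many-to-one assignment game -/
def gameValue (A : F → W → ℝ) (r : F → ℕ) (C : Finset (F ⊕ W)) : ℝ :=
  vGamma A r (firmPart C) (workerPart C)

/-- core membership -/
def inCore {N : Type*} [Fintype N] (v : Finset N → ℝ) (z : N → ℝ) : Prop :=
  (∑ k, z k) = v univ ∧ ∀ C : Finset N, v C ≤ ∑ k ∈ C, z k

/-- optimal matching of the grand coalition -/
def IsOptimalMatching (A : F → W → ℝ) (r : F → ℕ) (μ : Finset (F × W)) : Prop :=
  IsMatching r univ univ μ ∧
  ∀ μ' : Finset (F × W), IsMatching r univ univ μ' → matchValue A μ' ≤ matchValue A μ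

/-- workers assigned to firm `i` under the assignment function `m` -/
def assignedTo (m : W → F) (i : F) : Finset W := univ.filter fun j => m j = i

/-- the matching associated with an assignment function (every worker matched) -/
def matchingOfFn (m : W → F) : Finset (F × W) := univ.image fun j => (m j, j)

/-- `m : W → F` represents an optimal matching of a capacity-balanced market that assigns
exactly `r i` workers to each firm `i` and leaves no worker unmatched. -/
def IsBalancedOptimal (A : F → W → ℝ) (r : F → ℕ) (m : W → F) : Prop :=
  (∀ i : F, (assignedTo m i).card = r i) ∧
  IsOptimalMatching A r (matchingOfFn m)

/-- the projection of the core to the workers' payoffs -/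
def CW (A : F → W → ℝ) (m : W → F) : Set (W → ℝ) :=
  { y | (∀ j : W, 0 ≤ y j ∧ y j ≤ A (m j) j) ∧
        ∀ j k : W, m j ≠ m k → A (m j) k - A (m j) j ≤ y k - y j }

/-- excess of a coalition at a payoff vector -/
def excess {N : Type*} (v : Finset N → ℝ) (z : N → ℝ) (S : Finset N) : ℝ :=
  v S - ∑ k ∈ S, z k

/-- maximum surplus `s_ij(z)` of `i` against `j` at `z` -/
def maxSurplus {N : Type*} (v : Finset N → ℝ) (z : N → ℝ) (i j : N) : ℝ :=
  sSup { e | ∃ S : Finset N, i ∈ S ∧ j ∉ S ∧ e = excess v z S }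

def isImputation {N : Type*} [Fintype N] (v : Finset N → ℝ) (z : N → ℝ) : Prop :=
  (∑ k, z k) = v univ ∧ ∀ k : N, v {k} ≤ z k

def inKernel {N : Type*} [Fintype N] (v : Finset N → ℝ) (z : N → ℝ) : Prop :=
  isImputation v z ∧ ∀ i j : N, i ≠ j → maxSurplus v z i j = maxSurplus v z j i

/-- A coalition is inessential if it admits a nontrivial partition into two coalitions
whose values weakly majorize its own value. -/
def Inessential {N : Type*} (v : Finset N → ℝ) (R : Finset N) : Prop :=
  ∃ S T : Finset N, S.Nonempty ∧ T.Nonempty ∧ Disjoint S T ∧ S ∪ T = R ∧ v R ≤ v S + v T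

def Essential {N : Type*} (v : Finset N → ℝ) (R : Finset N) : Prop :=
  R.Nonempty ∧ ¬ Inessential v R

/-- arcs of the tight digraph on `W ∪ {0}` (node `0` is `none`) -/
def tightArc (A : F → W → ℝ) (m : W → F) (y : W → ℝ) : Option W → Option W → Prop
  | none, none => False
  | none, some k => y k = 0
  | some j, none => y j = A (m j) j
  | some j, some k => m j ≠ m k ∧ y k - y j = A (m j) k - A (m j) j


/-- the utopia payoff of player `k`: his/her marginal contribution to the grand
coalition -/
def utopia {N : Type*} [Fintype N] (v : Finset N → ℝ) (k : N) : ℝ :=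
  v univ - v (univ.erase k)

/-- the minimal right of player `k` -/
def minRight {N : Type*} [Fintype N] (v : Finset N → ℝ) (k : N) : ℝ :=
  (univ.powerset.filter fun S : Finset N => k ∈ S).sup'
    ⟨{k}, Finset.mem_filter.mpr ⟨Finset.mem_powerset.mpr (Finset.subset_univ _),
      Finset.mem_singleton_self k⟩⟩
    (fun S => v S - ∑ l ∈ S.erase k, utopia v l)

section Game

variable {N : Type*} [Fintype N] {v : Finset N → ℝ}

lemma minRight_eq_zero {k : N} (hk : 0 ≤ v {k})
    (h : ∀ C, k ∈ C → v C + utopia v k ≤ ∑ l ∈ C, utopia v l) : minRight v k = 0 := by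
  apply le_antisymm
  · refine sup'_le _ _ fun C hC => ?_
    have hkC : k ∈ C := (mem_filter.mp hC).2
    rw [sum_erase_eq_sub hkC]
    linarith [h C hkC]
  · calc 0 ≤ v {k} - ∑ l ∈ ({k} : Finset N).erase k, utopia v l := by simpa using hk
      _ ≤ minRight v k := le_sup' (fun C => v C - ∑ l ∈ C.erase k, utopia v l) (by simp)

/-- `z` is the τ-value of the game `v`: an efficient point of the segment from the minimal rights
vector to the utopia vector, the position on the segment being the parameter `κ`. -/
def IsTauValue (v : Finset N → ℝ) (z : N → ℝ) : Prop :=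
  (∃ κ : ℝ, 0 ≤ κ ∧ κ ≤ 1 ∧ ∀ k, z k = minRight v k + κ * (utopia v k - minRight v k)) ∧
    ∑ k, z k = v univ

lemma isTauValue_half_utopia (hmin : ∀ k, minRight v k = 0)
    (hsum : ∑ k, utopia v k = 2 * v univ) : IsTauValue v fun k => utopia v k / 2 := by
  refine ⟨⟨1 / 2, by norm_num, by norm_num, fun k => ?_⟩, ?_⟩
  · rw [hmin]
    ring
  · rw [← sum_div, hsum]
    ring

lemma inCore_half_utopia (hsum : ∑ k, utopia v k = 2 * v univ)
    (hC : ∀ C, 2 * v C ≤ ∑ k ∈ C, utopia v k) : inCore v fun k => utopia v k / 2 := by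
  refine ⟨?_, fun C => ?_⟩ <;> rw [← sum_div]
  · linarith
  · linarith [hC C]

end Game

section TwoSidedGame

variable {v : Finset (F ⊕ W) → ℝ}

omit [Fintype W] in
lemma firmPart_singleton_inl (i : F) : firmPart {(Sum.inl i : F ⊕ W)} = {i} := by
  ext
  simp [firmPart]

omit [Fintype F] in
lemma workerPart_singleton_inr (j : W) : workerPart {(Sum.inr j : F ⊕ W)} = {j} := by
  ext
  simp [workerPart]

lemma sum_eq_sum_firmPart_add_sum_workerPart (C : Finset (F ⊕ W)) (f : F ⊕ W → ℝ) :
    ∑ k ∈ C, f k =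
      ∑ i ∈ firmPart C, f (Sum.inl i) + ∑ j ∈ workerPart C, f (Sum.inr j) := by
  rw [sum_sum_eq_sum_toLeft_add_sum_toRight]
  congr 2 <;> ext <;> simp [firmPart, workerPart]

lemma minRight_eq_zero_of_le_sum_sides (hv : ∀ k, 0 ≤ v {k})
    (hF : ∀ C, v C ≤ ∑ i ∈ firmPart C, utopia v (Sum.inl i))
    (hW : ∀ C, v C ≤ ∑ j ∈ workerPart C, utopia v (Sum.inr j)) (k : F ⊕ W) :
    minRight v k = 0 := by
  have utopia_inl_nonneg (i : F) : 0 ≤ utopia v (Sum.inl i) := by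
    simpa [firmPart_singleton_inl] using (hv _).trans (hF {Sum.inl i})
  have utopia_inr_nonneg (j : W) : 0 ≤ utopia v (Sum.inr j) := by
    simpa [workerPart_singleton_inr] using (hv _).trans (hW {Sum.inr j})
  refine minRight_eq_zero (hv k) fun C hk => ?_
  rw [sum_eq_sum_firmPart_add_sum_workerPart]
  rcases k with i | j
  · have : utopia v (Sum.inl i) ≤ ∑ i ∈ firmPart C, utopia v (Sum.inl i) :=
      single_le_sum (f := fun i => utopia v (Sum.inl i)) (fun i _ => utopia_inl_nonneg i)
        (by simpa [firmPart] using hk)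
    linarith [hW C]
  · have : utopia v (Sum.inr j) ≤ ∑ j ∈ workerPart C, utopia v (Sum.inr j) :=
      single_le_sum (f := fun j => utopia v (Sum.inr j)) (fun j _ => utopia_inr_nonneg j)
        (by simpa [workerPart] using hk)
    linarith [hF C]

theorem isTauValue_and_inCore_half_utopia (hv : ∀ k, 0 ≤ v {k})
    (hF : ∀ C, v C ≤ ∑ i ∈ firmPart C, utopia v (Sum.inl i))
    (hW : ∀ C, v C ≤ ∑ j ∈ workerPart C, utopia v (Sum.inr j))
    (hFuniv : ∑ i, utopia v (Sum.inl i) = v univ) (hWuniv : ∑ j, utopia v (Sum.inr j) = v univ) :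
    IsTauValue v (fun k => utopia v k / 2) ∧ inCore v fun k => utopia v k / 2 := by
  have sum_utopia : ∑ k, utopia v k = 2 * v univ := by
    rw [Fintype.sum_sum_type, hFuniv, hWuniv, two_mul]
  refine ⟨isTauValue_half_utopia (minRight_eq_zero_of_le_sum_sides hv hF hW) sum_utopia,
    inCore_half_utopia sum_utopia fun C => ?_⟩
  rw [sum_eq_sum_firmPart_add_sum_workerPart, two_mul]
  exact add_le_add (hF C) (hW C)

end TwoSidedGame

namespace IsMatching

omit [Fintype F] [Fintype W]

variable {A : F → W → ℝ} {r : F → ℕ} {S : Finset F} {T : Finset W} {μ : Finset (F × W)}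

lemma restrict (hμ : IsMatching r S T μ) (S' : Finset F) (T' : Finset W) :
    IsMatching r S' T' (μ.filter fun p => p.1 ∈ S' ∧ p.2 ∈ T') :=
  ⟨fun _ hp => (mem_filter.mp hp).2,
    fun i => (card_le_card (filter_subset_filter _ (filter_subset _ _))).trans (hμ.2.1 i),
    fun j => (card_le_card (filter_subset_filter _ (filter_subset _ _))).trans (hμ.2.2 j)⟩

lemma injOn_snd (hμ : IsMatching r S T μ) : Set.InjOn Prod.snd (μ : Set (F × W)) :=
  fun p hp q hq hpq => card_le_one.mp (hμ.2.2 q.2) p (mem_filter.mpr ⟨hp, hpq⟩) q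
    (mem_filter.mpr ⟨hq, rfl⟩)

lemma matchValue_le_sum_firms (hμ : IsMatching r S T μ) {x : F → ℝ}
    (hx : ∀ (i : F) (U : Finset W), U.card ≤ r i → ∑ j ∈ U, A i j ≤ x i) :
    matchValue A μ ≤ ∑ i ∈ S, x i := by
  rw [matchValue, ← sum_fiberwise_of_maps_to (g := Prod.fst) fun p hp => (hμ.1 p hp).1]
  refine sum_le_sum fun i _ => ?_
  calc ∑ p ∈ μ with p.1 = i, A p.1 p.2
      = ∑ p ∈ μ with p.1 = i, A i p.2 :=
        sum_congr rfl fun p hp => by rw [(mem_filter.mp hp).2]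
    _ = ∑ j ∈ (μ.filter fun p => p.1 = i).image Prod.snd, A i j :=
        (sum_image (hμ.injOn_snd.mono (filter_subset _ _))).symm
    _ ≤ x i := hx i _ (card_image_le.trans (hμ.2.1 i))

lemma matchValue_le_sum_workers (hμ : IsMatching r S T μ) {y : W → ℝ}
    (hy₀ : ∀ j, 0 ≤ y j) (hy : ∀ j i, A i j ≤ y j) : matchValue A μ ≤ ∑ j ∈ T, y j :=
  calc matchValue A μ ≤ ∑ p ∈ μ, y p.2 := sum_le_sum fun _ _ => hy _ _
    _ = ∑ j ∈ μ.image Prod.snd, y j := (sum_image hμ.injOn_snd).symm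
    _ ≤ ∑ j ∈ T, y j :=
        sum_le_sum_of_subset_of_nonneg (image_subset_iff.mpr fun p hp => (hμ.1 p hp).2)
          fun j _ _ => hy₀ j

end IsMatching

section Worth

variable {A : F → W → ℝ} {r : F → ℕ} {S : Finset F} {T : Finset W}

lemma vGamma_le {c : ℝ} (h : ∀ μ, IsMatching r S T μ → matchValue A μ ≤ c) :
    vGamma A r S T ≤ c :=
  sup'_le _ _ fun μ hμ => h μ (mem_filter.mp hμ).2

lemma IsMatching.matchValue_le_vGamma {μ : Finset (F × W)} (hμ : IsMatching r S T μ) :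
    matchValue A μ ≤ vGamma A r S T :=
  le_sup' (matchValue A) <|
    mem_filter.mpr ⟨mem_powerset.mpr fun p hp => mem_product.mpr (hμ.1 p hp), hμ⟩

lemma gameValue_nonneg (C : Finset (F ⊕ W)) : 0 ≤ gameValue A r C :=
  (empty_isMatching r (firmPart C) (workerPart C)).matchValue_le_vGamma

lemma gameValue_univ : gameValue A r univ = vGamma A r univ univ := by
  simp [gameValue, firmPart, workerPart]

lemma utopia_gameValue_inl (i : F) :
    utopia (gameValue A r) (Sum.inl i) =
      vGamma A r univ univ - vGamma A r (univ.erase i) univ := by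
  simp [utopia, gameValue, firmPart, workerPart, filter_ne']

lemma utopia_gameValue_inr (j : W) :
    utopia (gameValue A r) (Sum.inr j) =
      vGamma A r univ univ - vGamma A r univ (univ.erase j) := by
  simp [utopia, gameValue, firmPart, workerPart, filter_ne']

end Worth

section Assignment

variable {A : F → W → ℝ} {r : F → ℕ} {m : W → F}

lemma card_assignedTo_le (hm : IsMatching r univ univ (matchingOfFn m)) (i : F) :
    (assignedTo m i).card ≤ r i := by
  refine (card_le_card_of_injOn (fun j => (m j, j)) ?_ ?_).trans (hm.2.1 i)
  · intro j hj
    simpa [matchingOfFn, assignedTo] using hj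
  · exact fun j _ k _ hjk => congrArg Prod.snd hjk

lemma sum_assigned_le_vGamma (hm : IsMatching r univ univ (matchingOfFn m))
    (S : Finset F) (T : Finset W) : ∑ j ∈ T with m j ∈ S, A (m j) j ≤ vGamma A r S T := by
  have value_restrict : matchValue A ((matchingOfFn m).filter fun p => p.1 ∈ S ∧ p.2 ∈ T) =
      ∑ j ∈ T with m j ∈ S, A (m j) j := by
    rw [matchValue, matchingOfFn, filter_image,
      sum_image fun j _ k _ hjk => congrArg Prod.snd hjk]
    exact sum_congr (by ext; simp [and_comm]) fun _ _ => rfl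
  exact value_restrict ▸ (hm.restrict S T).matchValue_le_vGamma

omit [Fintype F] in
lemma sum_assigned_eq_sum_firms (S : Finset F) :
    ∑ j with m j ∈ S, A (m j) j = ∑ i ∈ S, ∑ j ∈ assignedTo m i, A i j := by
  rw [← sum_fiberwise_of_maps_to (t := S) (g := m) fun j hj => (mem_filter.mp hj).2]
  refine sum_congr rfl fun i hi => sum_congr ?_ ?_
  · ext j
    simp only [assignedTo, mem_filter, mem_univ, true_and]
    exact and_iff_right_of_imp fun hj => hj ▸ hi
  · intro j hj
    rw [(mem_filter.mp hj).2]

-- Dismissing `j` leaves its firm within capacity, so `j` cannot lower the value of the firm.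
lemma assigned_nonneg (hm : IsMatching r univ univ (matchingOfFn m))
    (hfirm : ∀ (i : F) (T : Finset W), T.card ≤ r i →
      ∑ j ∈ T, A i j ≤ ∑ j ∈ assignedTo m i, A i j) (j : W) : 0 ≤ A (m j) j := by
  have hj : j ∈ assignedTo m (m j) := by simp [assignedTo]
  have := hfirm (m j) ((assignedTo m (m j)).erase j)
    (card_erase_le.trans (card_assignedTo_le hm (m j)))
  rw [sum_erase_eq_sub hj] at this
  linarith

lemma vGamma_univ_workers (hm : IsMatching r univ univ (matchingOfFn m))
    (hfirm : ∀ (i : F) (T : Finset W), T.card ≤ r i →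
      ∑ j ∈ T, A i j ≤ ∑ j ∈ assignedTo m i, A i j) (S : Finset F) :
    vGamma A r S univ = ∑ i ∈ S, ∑ j ∈ assignedTo m i, A i j := by
  refine le_antisymm (vGamma_le fun μ hμ => hμ.matchValue_le_sum_firms hfirm) ?_
  rw [← sum_assigned_eq_sum_firms]
  exact sum_assigned_le_vGamma hm S univ

lemma vGamma_univ_firms (hm : IsMatching r univ univ (matchingOfFn m))
    (hnonneg : ∀ j, 0 ≤ A (m j) j) (hworker : ∀ j i, A i j ≤ A (m j) j) (T : Finset W) :
    vGamma A r univ T = ∑ j ∈ T, A (m j) j := by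
  refine le_antisymm (vGamma_le fun μ hμ => hμ.matchValue_le_sum_workers hnonneg hworker) ?_
  simpa using sum_assigned_le_vGamma (A := A) hm univ T

lemma utopia_gameValue_eq (hm : IsMatching r univ univ (matchingOfFn m))
    (hfirm : ∀ (i : F) (T : Finset W), T.card ≤ r i →
      ∑ j ∈ T, A i j ≤ ∑ j ∈ assignedTo m i, A i j)
    (hworker : ∀ j i, A i j ≤ A (m j) j) :
    utopia (gameValue A r) =
      Sum.elim (fun i => ∑ j ∈ assignedTo m i, A i j) fun j => A (m j) j := by
  ext (i | j)
  · rw [utopia_gameValue_inl, vGamma_univ_workers hm hfirm, vGamma_univ_workers hm hfirm,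
      sum_erase_eq_sub (mem_univ i), sub_sub_cancel, Sum.elim_inl]
  · have hnonneg := assigned_nonneg hm hfirm
    rw [utopia_gameValue_inr, vGamma_univ_firms hm hnonneg hworker,
      vGamma_univ_firms hm hnonneg hworker, sum_erase_eq_sub (mem_univ j), sub_sub_cancel,
      Sum.elim_inr]

end Assignment

theorem dominantDiagonal_tauValue_general (A : F → W → ℝ) (r : F → ℕ) (m : W → F)
    (hm : IsMatching r univ univ (matchingOfFn m))
    (hfirm : ∀ (i : F) (T : Finset W), T.card ≤ r i →
      ∑ j ∈ T, A i j ≤ ∑ j ∈ assignedTo m i, A i j)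
    (hworker : ∀ (j : W) (i : F), A i j ≤ A (m j) j) :
    IsTauValue (gameValue A r)
        (Sum.elim (fun i => (∑ j ∈ assignedTo m i, A i j) / 2) fun j => A (m j) j / 2) ∧
      inCore (gameValue A r)
        (Sum.elim (fun i => (∑ j ∈ assignedTo m i, A i j) / 2) fun j => A (m j) j / 2) := by
  have hnonneg := assigned_nonneg hm hfirm
  have hU := utopia_gameValue_eq hm hfirm hworker
  have half_utopia : (Sum.elim (fun i => (∑ j ∈ assignedTo m i, A i j) / 2) fun j =>
      A (m j) j / 2) = fun k => utopia (gameValue A r) k / 2 := by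
    ext (i | j) <;> simp only [hU, Sum.elim_inl, Sum.elim_inr]
  rw [half_utopia]
  apply isTauValue_and_inCore_half_utopia fun k => gameValue_nonneg {k}
  all_goals simp only [hU, Sum.elim_inl, Sum.elim_inr]
  · exact fun C => vGamma_le fun μ hμ => hμ.matchValue_le_sum_firms hfirm
  · exact fun C => vGamma_le fun μ hμ => hμ.matchValue_le_sum_workers hnonneg hworker
  · rw [gameValue_univ, vGamma_univ_workers hm hfirm]
  · rw [gameValue_univ, vGamma_univ_firms hm hnonneg hworker]

/-- in a dominant diagonal capacity-balanced market, the τ-value of the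
associated game is a core allocation and equals the average of the firm-optimal and the
worker-optimal core allocations, namely `(x^f/2 ; y^w/2)`; being the τ-value means
lying on the segment between the minimal rights vector and the utopia vector while
being efficient. -/
theorem dominantDiagonal_tauValue (A : F → W → ℝ) (r : F → ℕ)
    (hA : ∀ i j, 0 ≤ A i j) (hbal : ∑ i, r i = Fintype.card W)
    (m : W → F) (hm : IsBalancedOptimal A r m)
    (hdd1 : ∀ (i : F) (T : Finset W), T.card ≤ r i →
        ∑ j ∈ T, A i j ≤ ∑ j ∈ assignedTo m i, A i j)
    (hdd2 : ∀ (j : W) (i : F), A i j ≤ A (m j) j) :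
    (∃ κ : ℝ, 0 ≤ κ ∧ κ ≤ 1 ∧
        ∀ k : F ⊕ W,
          Sum.elim (fun i => (∑ j ∈ assignedTo m i, A i j) / 2)
              (fun j => A (m j) j / 2) k =
            minRight (gameValue A r) k +
              κ * (utopia (gameValue A r) k - minRight (gameValue A r) k)) ∧
    (∑ k : F ⊕ W,
        Sum.elim (fun i => (∑ j ∈ assignedTo m i, A i j) / 2)
          (fun j => A (m j) j / 2) k = gameValue A r univ) ∧
    inCore (gameValue A r)
      (Sum.elim (fun i => (∑ j ∈ assignedTo m i, A i j) / 2)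
        (fun j => A (m j) j / 2)) := by
  have ⟨⟨segment, efficient⟩, core⟩ :=
    dominantDiagonal_tauValue_general A r m hm.2.1 hdd1 hdd2
  exact ⟨segment, efficient, core⟩

end
end

section
/- Let (B,S,A,r) be a capacity-balanced many-to-one buyer-seller market where buyers have unit capacity, and let μ be an optimal matching. Then (x,y)∈ℝ^B×ℝ^S is a competitive equilibrium payoff vector if and only if: (i) 0 ≤ x_i ≤ a_{iμ(i)} for all i∈B; (ii) x_k − x_i ≥ a_{kμ(i)} − a_{iμ(i)} for all i,k∈B; and (iii) y_j = Σ_{i∈B : μ(i)=j} (a_{ij} − x_i) for all j∈S. -/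
/-!
At equilibrium a buyer `i` and the seller `μ i` share the surplus `A i (μ i)`, so `x` determines the
price `A i (μ i) - x i` of `μ i`, and (ii) says that no buyer `k` would gain by moving to `μ i`.
Conversely, given `x ≥ 0`, charge for each seller the least nonnegative price at which no buyer `i`
gets more than `x i` there, namely the maximum of `0` and all `A i j - x i`. For a matched seller,
(i) and (ii) say precisely that this maximum is attained at each of its buyers.
-/

open Finset
open scoped Classical

noncomputable section

variable {B S : Type*} [Fintype B] [Fintype S]

/-- `ν` is a matching of the buyer-seller market: each buyer appears in at most one
pair, and each seller `j` in at most `r j` pairs. -/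
def IsBSMatching (r : S → ℕ) (ν : Finset (B × S)) : Prop :=
  (∀ i : B, (ν.filter fun p => p.1 = i).card ≤ 1) ∧
  (∀ j : S, (ν.filter fun p => p.2 = j).card ≤ r j)

/-- `μ : B → S` represents an optimal matching of the capacity-balanced buyer-seller
market: each seller `j` is matched to exactly `r j` buyers and the total value of `μ`
is maximal among all matchings. -/
def IsBSBalancedOptimal (A : B → S → ℝ) (r : S → ℕ) (μ : B → S) : Prop :=
  (∀ j : S, (univ.filter fun i => μ i = j).card = r j) ∧
  ∀ ν : Finset (B × S), IsBSMatching r ν → ∑ p ∈ ν, A p.1 p.2 ≤ ∑ i : B, A i (μ i)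

variable {Buyer Seller M : Type*} [AddCommGroup M]

theorem sub_le_sub_iff_sub_le_sub [PartialOrder M] [IsOrderedAddMonoid M] {a b c d : M} :
    a - b ≤ c - d ↔ a - c ≤ b - d := by
  rw [sub_le_sub_iff, sub_le_sub_iff, add_comm b c]

theorem card_fiber_nsmul_eq_sum_sub [Fintype Buyer] {A : Buyer → Seller → M} {μ : Buyer → Seller}
    {x : Buyer → M} {p : Seller → M} (hp : ∀ i, p (μ i) = A i (μ i) - x i) (j : Seller) :
    #{i | μ i = j} • p j = ∑ i with μ i = j, (A i j - x i) := by
  rw [← sum_const]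
  refine sum_congr rfl fun i hi ↦ ?_
  obtain rfl : μ i = j := (mem_filter.mp hi).2
  exact hp i

section MinPrice

variable [Fintype Buyer] [SemilatticeSup M]

/-- The minimal nonnegative price of seller `j` at which no buyer `i` obtains more than `x i` from
`j`, used to recover equilibrium prices from buyer payoffs. The supremum runs over `Option Buyer`,
where `none` contributes the lower bound `0`. -/
def minPrice (A : Buyer → Seller → M) (x : Buyer → M) (j : Seller) : M :=
  univ.sup' univ_nonempty fun o : Option Buyer ↦ o.elim 0 fun i ↦ A i j - x i

theorem minPrice_le_iff {A : Buyer → Seller → M} {x : Buyer → M} {j : Seller} {q : M} :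
    minPrice A x j ≤ q ↔ 0 ≤ q ∧ ∀ i, A i j - x i ≤ q := by
  simp [minPrice, Option.forall]

theorem minPrice_nonneg (A : Buyer → Seller → M) (x : Buyer → M) (j : Seller) :
    0 ≤ minPrice A x j :=
  (minPrice_le_iff.mp le_rfl).1

theorem sub_le_minPrice (A : Buyer → Seller → M) (x : Buyer → M) (i : Buyer) (j : Seller) :
    A i j - x i ≤ minPrice A x j :=
  (minPrice_le_iff.mp le_rfl).2 i

theorem minPrice_eq_sub_iff {A : Buyer → Seller → M} {x : Buyer → M} {i : Buyer} {j : Seller} :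
    minPrice A x j = A i j - x i ↔ 0 ≤ A i j - x i ∧ ∀ k, A k j - x k ≤ A i j - x i := by
  rw [← minPrice_le_iff, le_antisymm_iff, and_iff_left (sub_le_minPrice A x i j)]

end MinPrice

theorem buyerSeller_CE_characterization_general [Fintype Buyer] [SemilatticeSup M]
    [IsOrderedAddMonoid M] (A : Buyer → Seller → M) (r : Seller → ℕ) (μ : Buyer → Seller)
    (hr : ∀ j, #{i | μ i = j} = r j) (x : Buyer → M) (y : Seller → M) :
    (∃ p : Seller → M, (∀ j, 0 ≤ p j) ∧
        (∀ i j, A i j - p j ≤ A i (μ i) - p (μ i)) ∧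
        (∀ i, 0 ≤ A i (μ i) - p (μ i)) ∧
        (∀ i, x i = A i (μ i) - p (μ i)) ∧
        (∀ j, y j = r j • p j)) ↔
      ((∀ i, 0 ≤ x i ∧ x i ≤ A i (μ i)) ∧
       (∀ i k, A k (μ i) - A i (μ i) ≤ x k - x i) ∧
       (∀ j, y j = ∑ i with μ i = j, (A i j - x i))) := by
  simp only [← hr]
  constructor
  · rintro ⟨p, p_nonneg, utility_le, utility_nonneg, hx, hy⟩
    have price_eq i : p (μ i) = A i (μ i) - x i := by rw [hx, sub_sub_cancel]
    refine ⟨fun i ↦ ⟨hx i ▸ utility_nonneg i, hx i ▸ sub_le_self _ (p_nonneg _)⟩,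
      fun i k ↦ ?_, fun j ↦ (hy j).trans (card_fiber_nsmul_eq_sum_sub price_eq j)⟩
    rw [sub_le_sub_iff_sub_le_sub, ← price_eq, hx k]
    exact sub_le_comm.mp (utility_le k (μ i))
  · rintro ⟨x_bounds, payoff_sub_ge, hy⟩
    have price_eq i : minPrice A x (μ i) = A i (μ i) - x i :=
      minPrice_eq_sub_iff.mpr ⟨sub_nonneg.mpr (x_bounds i).2,
        fun k ↦ sub_le_sub_iff_sub_le_sub.mpr (payoff_sub_ge i k)⟩
    have hx i : x i = A i (μ i) - minPrice A x (μ i) := by rw [price_eq, sub_sub_cancel]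
    refine ⟨minPrice A x, minPrice_nonneg A x, fun i j ↦ ?_, fun i ↦ hx i ▸ (x_bounds i).1, hx,
      fun j ↦ (hy j).trans (card_fiber_nsmul_eq_sum_sub price_eq j).symm⟩
    rw [← hx]
    exact sub_le_comm.mp (sub_le_minPrice A x i j)

/-- in a capacity-balanced buyer-seller market with unit-demand buyers,
`(x,y)` is a competitive equilibrium payoff vector iff (i) `0 ≤ x i ≤ a_{i μ(i)}` for
all buyers, (ii) `x k - x i ≥ a_{k μ(i)} - a_{i μ(i)}` for all pairs of buyers, and
(iii) each seller's payoff equals the total surplus left by its assigned buyers. -/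
theorem buyerSeller_CE_characterization (A : B → S → ℝ) (r : S → ℕ)
    (hA : ∀ i j, 0 ≤ A i j) (hbal : Fintype.card B = ∑ j : S, r j)
    (μ : B → S) (hμ : IsBSBalancedOptimal A r μ) (x : B → ℝ) (y : S → ℝ) :
    (∃ p : S → ℝ, (∀ j : S, 0 ≤ p j) ∧
        (∀ (i : B) (j : S), A i j - p j ≤ A i (μ i) - p (μ i)) ∧
        (∀ i : B, 0 ≤ A i (μ i) - p (μ i)) ∧
        (∀ i : B, x i = A i (μ i) - p (μ i)) ∧
        (∀ j : S, y j = (r j : ℝ) * p j)) ↔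
      ((∀ i : B, 0 ≤ x i ∧ x i ≤ A i (μ i)) ∧
       (∀ i k : B, A k (μ i) - A i (μ i) ≤ x k - x i) ∧
       (∀ j : S, y j = ∑ i ∈ univ.filter (fun i => μ i = j), (A i j - x i))) := by
  simpa only [nsmul_eq_mul] using buyerSeller_CE_characterization_general A r μ hμ.1 x y

end
end
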